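/- For every complex number s with Re(s) > 1, the function φ_s(z) = ∑_{n=1}^{∞} α_n(z)/n^s satisfies the functional equation of exponential functions: for all complex numbers z₁, z₂, one has φ_s(z₁ + z₂) = φ_s(z₁)·φ_s(z₂). -/

import Mathlib

/-!
The functional equation is the identity of Dirichlet series attached to a convolution identity
between arithmetic functions. For fixed `z` the function `n ↦ α_n(z)` is multiplicative, with value
`[z;k]` at `p ^ k`. The Chu–Vandermonde identity `[z₁ + z₂;k] = ∑_{i+j=k} [z₁;i] [z₂;j]` says that
`α(z₁ + z₂)` and the Dirichlet convolution `α(z₁) * α(z₂)` agree on prime powers, hence everywhere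
(`alphaArith_add`).

Absolute convergence comes from the same identity: `α_n(1) = 1`, so `α(N)` is the `N`-fold
convolution of the constant function `1` and its Dirichlet series converges absolutely for
`Re s > 1`; for general `z` one has `|α_n(z)| ≤ α_n(N)` as soon as `|z| ≤ N`
(`alphaArith_summable`). The product of the two absolutely convergent series is then the series of
the convolution.
-/

open Finset

/-- The Pochhammer polynomial `[z;k] = (1/k!) * ∏_{i=0}^{k-1} (z+i)`, with `[z;0] = 1`. -/
noncomputable def poch (z : ℂ) (k : ℕ) : ℂ :=
  ((k.factorial : ℂ))⁻¹ * ∏ i ∈ Finset.range k, (z + i)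

/-- The prime-signature polynomial `α_n(z) = ∏_{p^k ∥ n} [z;k]`, with `α_1(z) = 1`. -/
noncomputable def alphaSig (n : ℕ) (z : ℂ) : ℂ :=
  ∏ p ∈ n.primeFactors, poch z (n.factorization p)

/-- The Pochhammer polynomial `[z;k]` is the generalized multiset coefficient. -/
lemma poch_eq_multichoose (z : ℂ) (k : ℕ) : poch z k = Ring.multichoose z k := by
  have h := Ring.factorial_nsmul_multichoose_eq_ascPochhammer z k
  have h2 : (ascPochhammer ℕ k).smeval z = ∏ i ∈ Finset.range k, (z + i) := by
    clear h
    induction k with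
    | zero => simp [Polynomial.smeval_one]
    | succ k ih =>
      rw [Finset.prod_range_succ, ← ih, ascPochhammer_succ_right, Polynomial.smeval_mul,
        Polynomial.smeval_add, Polynomial.smeval_X, Polynomial.smeval_natCast]
      simp
  rw [h2, nsmul_eq_mul] at h
  rw [poch, ← h, inv_mul_cancel_left₀ (Nat.cast_ne_zero.mpr k.factorial_ne_zero)]

/-- The Chu–Vandermonde identity for Pochhammer polynomials, obtained from the one for
generalized binomial coefficients through `[z;k] = (-1)^k * choose (-z) k`. -/
lemma poch_add (z₁ z₂ : ℂ) (k : ℕ) :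
    poch (z₁ + z₂) k = ∑ ij ∈ antidiagonal k, poch z₁ ij.1 * poch z₂ ij.2 := by
  have key : ∀ (z : ℂ) (k : ℕ), poch z k = (-1) ^ k * Ring.choose (-z) k := by
    intro z k
    rw [poch_eq_multichoose, Ring.choose_neg', Units.smul_def, zsmul_eq_mul, ← mul_assoc]
    simp [Int.negOnePow_def, ← mul_pow]
  rw [key, neg_add, Ring.add_choose_eq k (Commute.all _ _), Finset.mul_sum]
  refine Finset.sum_congr rfl fun ij hij => ?_
  rw [key, key, ← mem_antidiagonal.mp hij, pow_add]
  ring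

lemma poch_one_left (k : ℕ) : poch 1 k = 1 := by
  rw [poch_eq_multichoose, Ring.multichoose_one]

lemma norm_poch_le (z : ℂ) (N : ℕ) (h : ‖z‖ ≤ N) (k : ℕ) : ‖poch z k‖ ≤ ‖poch N k‖ := by
  simp only [poch, norm_mul, norm_prod]
  gcongr with i
  calc ‖z + i‖ ≤ ‖z‖ + ‖(i : ℂ)‖ := norm_add_le _ _
    _ ≤ N + i := by simpa using h
    _ = ‖(N : ℂ) + i‖ := by
      rw [← Nat.cast_add (R := ℂ), Complex.norm_natCast, Nat.cast_add]

/-- The function `n ↦ α_n(z)` as an arithmetic function, with the value at `0` set to `0`. -/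
noncomputable def alphaArith (z : ℂ) : ArithmeticFunction ℂ :=
  ⟨fun n => if n = 0 then 0 else alphaSig n z, by simp⟩

lemma alphaArith_apply (z : ℂ) {n : ℕ} (hn : n ≠ 0) : alphaArith z n = alphaSig n z := by
  simp [alphaArith, hn]

lemma alphaArith_isMultiplicative (z : ℂ) : (alphaArith z).IsMultiplicative := by
  rw [ArithmeticFunction.IsMultiplicative.iff_ne_zero]
  refine ⟨by simp [alphaArith, alphaSig], fun {m n} hm hn hmn => ?_⟩
  rw [alphaArith_apply z hm, alphaArith_apply z hn, alphaArith_apply z (mul_ne_zero hm hn)]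
  have h : ∀ n, alphaSig n z = n.factorization.prod fun _ k => poch z k := fun n => rfl
  rw [h, h, h, Nat.factorization_mul hm hn]
  exact Finsupp.prod_add_index_of_disjoint (by simpa using hmn.disjoint_primeFactors) _

lemma alphaArith_prime_pow (z : ℂ) {p : ℕ} (hp : p.Prime) (k : ℕ) :
    alphaArith z (p ^ k) = poch z k := by
  rw [alphaArith_apply z (pow_ne_zero _ hp.ne_zero)]
  change (p ^ k).factorization.prod (fun _ k => poch z k) = _
  rw [hp.factorization_pow, Finsupp.prod_single_index (by simp [poch])]

lemma alphaArith_add (z₁ z₂ : ℂ) : alphaArith (z₁ + z₂) = alphaArith z₁ * alphaArith z₂ := by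
  rw [ArithmeticFunction.IsMultiplicative.eq_iff_eq_on_prime_powers _
    (alphaArith_isMultiplicative _) _
    ((alphaArith_isMultiplicative _).mul (alphaArith_isMultiplicative _))]
  intro p k hp
  rw [alphaArith_prime_pow _ hp, poch_add, ArithmeticFunction.mul_apply,
    Nat.sum_divisorsAntidiagonal (fun a b => alphaArith z₁ a * alphaArith z₂ b),
    Nat.sum_divisors_prime_pow hp,
    Finset.Nat.sum_antidiagonal_eq_sum_range_succ (fun i j => poch z₁ i * poch z₂ j)]
  refine Finset.sum_congr rfl fun i hi => ?_
  rw [Nat.pow_div (Finset.mem_range_succ_iff.mp hi) hp.pos, alphaArith_prime_pow _ hp,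
    alphaArith_prime_pow _ hp]

lemma alphaArith_natCast_summable {s : ℂ} (hs : 1 < s.re) (N : ℕ) :
    LSeriesSummable (fun n => alphaArith ((N + 1 : ℕ) : ℂ) n) s := by
  induction N with
  | zero =>
    refine (LSeriesSummable_congr s fun {n} hn => ?_).mpr (LSeriesSummable_one_iff.mpr hs)
    simp [alphaArith_apply _ hn, alphaSig, poch_one_left]
  | succ N ih =>
    rw [Nat.cast_add_one (N + 1), alphaArith_add]
    refine ArithmeticFunction.LSeriesSummable_mul ih ?_
    refine (LSeriesSummable_congr s fun {n} hn => ?_).mpr (LSeriesSummable_one_iff.mpr hs)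
    simp [alphaArith_apply _ hn, alphaSig, poch_one_left]

lemma alphaArith_summable {s : ℂ} (hs : 1 < s.re) (z : ℂ) :
    LSeriesSummable (fun n => alphaArith z n) s := by
  obtain ⟨N, hN⟩ := exists_nat_ge ‖z‖
  have hN1 : ‖z‖ ≤ (N + 1 : ℕ) := hN.trans (by exact_mod_cast N.le_succ)
  refine Summable.of_norm_bounded (alphaArith_natCast_summable hs N).norm fun n =>
    LSeries.norm_term_le s ?_
  rcases eq_or_ne n 0 with rfl | hn
  · simp
  · rw [alphaArith_apply _ hn, alphaArith_apply _ hn, alphaSig, alphaSig, norm_prod, norm_prod]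
    exact Finset.prod_le_prod (fun _ _ => norm_nonneg _) fun _ _ => norm_poch_le z _ hN1 _

lemma tsum_alphaSig_eq_LSeries {s : ℂ} (hs : 1 < s.re) (z : ℂ) :
    ∑' n : ℕ, alphaSig (n + 1) z / ((n : ℂ) + 1) ^ s = LSeries (fun n => alphaArith z n) s := by
  have h := alphaArith_summable hs z
  rw [LSeries, h.tsum_eq_zero_add, LSeries.term_zero, zero_add]
  refine tsum_congr fun n => ?_
  rw [LSeries.term_of_ne_zero n.succ_ne_zero, alphaArith_apply _ n.succ_ne_zero, Nat.cast_succ]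

theorem alphaSig_dirichlet_mul (s : ℂ) (hs : 1 < s.re) (z₁ z₂ : ℂ) :
    ∑' n : ℕ, alphaSig (n + 1) (z₁ + z₂) / ((n : ℂ) + 1) ^ s =
      (∑' n : ℕ, alphaSig (n + 1) z₁ / ((n : ℂ) + 1) ^ s) *
        (∑' n : ℕ, alphaSig (n + 1) z₂ / ((n : ℂ) + 1) ^ s) := by
  rw [tsum_alphaSig_eq_LSeries hs, tsum_alphaSig_eq_LSeries hs, tsum_alphaSig_eq_LSeries hs,
    alphaArith_add]
  exact ArithmeticFunction.LSeries_mul' (alphaArith_summable hs z₁) (alphaArith_summable hs z₂)
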